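/- There exists an absolute constant K such that for every finite set A of positive real numbers with |A| ≥ 2, one has |A·A|^6 · |A−A|^5 ≥ K · |A|^{14} / (log|A|)^2, where A·A = {a·a' : a,a' ∈ A}. -/

import Mathlib

open Finset Pointwise

noncomputable def dlt (X Y : Finset ℝ) (s : ℝ) : ℕ :=
  ((X ×ˢ Y).filter (fun p => p.1 - p.2 = s)).card

noncomputable def sg (X Y : Finset ℝ) (s : ℝ) : ℕ :=
  ((X ×ˢ Y).filter (fun p => p.1 + p.2 = s)).card

noncomputable def En (X Y : Finset ℝ) : ℝ :=
  ∑ s ∈ X - X, (dlt X X s : ℝ) * (dlt Y Y s : ℝ)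

noncomputable def E3 (X : Finset ℝ) : ℝ :=
  ∑ s ∈ X - X, (dlt X X s : ℝ) ^ 3

noncomputable def E15 (X : Finset ℝ) : ℝ :=
  ∑ s ∈ X - X, (dlt X X s : ℝ) ^ ((3 : ℝ) / 2)

/-- The number of elements of `X` below `x`. -/
noncomputable def rankIn (X : Finset ℝ) (x : ℝ) : ℕ := (X.filter (· < x)).card

lemma rankIn_mono (X : Finset ℝ) : Monotone (rankIn X) := fun _ _ h =>
  card_le_card fun _ hz => by
    rw [mem_filter] at hz ⊢
    exact ⟨hz.1, hz.2.trans_le h⟩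

lemma rankIn_le_card (X : Finset ℝ) (x : ℝ) : rankIn X x ≤ X.card := card_filter_le _ _

lemma rankIn_lt {X : Finset ℝ} {x y : ℝ} (hx : x ∈ X) (h : x < y) : rankIn X x < rankIn X y := by
  apply card_lt_card
  rw [ssubset_iff_of_subset]
  · exact ⟨x, by simp [hx, h], by simp⟩
  · intro z hz
    rw [mem_filter] at hz ⊢
    exact ⟨hz.1, hz.2.trans h⟩

lemma rankIn_injOn (X : Finset ℝ) : Set.InjOn (rankIn X) X := by
  intro x hx y hy h
  rcases lt_trichotomy x y with hlt | rfl | hlt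
  · exact absurd h (rankIn_lt hx hlt).ne
  · rfl
  · exact absurd h (rankIn_lt hy hlt).ne'

/-- Pairs of elements of `X` whose ranks lie in the same block of length `q`. -/
noncomputable def blockPairs (X : Finset ℝ) (q : ℕ) : Finset (ℝ × ℝ) :=
  (X ×ˢ X).filter fun p => rankIn X p.1 / q = rankIn X p.2 / q

lemma card_blockPairs_le (X : Finset ℝ) {q : ℕ} (hq : 0 < q) :
    (blockPairs X q).card ≤ X.card * q := by
  have : (X ×ˢ range q).card = X.card * q := by simp
  rw [← this]
  apply card_le_card_of_injOn (fun p => (p.1, rankIn X p.2 % q))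
  · intro p hp
    simp only [blockPairs, coe_filter, Set.mem_ofPred_eq, mem_product] at hp
    simp [hp.1.1, Nat.mod_lt _ hq]
  · rintro ⟨x, y⟩ hp ⟨x', y'⟩ hp' h
    simp only [blockPairs, coe_filter, Set.mem_ofPred_eq, mem_product] at hp hp'
    simp only [Prod.mk.injEq] at h ⊢
    obtain ⟨rfl, h⟩ := h
    refine ⟨rfl, rankIn_injOn X hp.1.2 hp'.1.2 ?_⟩
    rw [← Nat.div_add_mod (rankIn X y) q, ← Nat.div_add_mod (rankIn X y') q, h, ← hp.2, hp'.2]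

lemma card_le_card_offDiag_filter {α : Type*} [DecidableEq α] (S : Finset α) (c : α → ℕ) (V : ℕ)
    (hc : ∀ a ∈ S, c a < V) (hV : 2 * V ≤ S.card) :
    S.card ≤ (S.offDiag.filter fun p => c p.1 = c p.2).card := by
  have h1 : S.card = ∑ v ∈ range V, (S.filter (c · = v)).card :=
    card_eq_sum_card_fiberwise fun a ha => by simpa using hc a ha
  have h2 : (S.offDiag.filter fun p => c p.1 = c p.2).card
      = ∑ v ∈ range V, (S.filter (c · = v)).offDiag.card := by
    rw [card_eq_sum_card_fiberwise (f := fun p => c p.1) (t := range V)]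
    · refine sum_congr rfl fun v _ => congrArg card ?_
      ext ⟨a, b⟩
      simp only [mem_filter, mem_offDiag]
      grind
    · intro p hp
      simp only [coe_filter, mem_offDiag, Set.mem_ofPred_eq] at hp
      simpa using hc _ hp.1.1
  have h3 : 2 * S.card ≤ (S.offDiag.filter fun p => c p.1 = c p.2).card + 2 * V := by
    rw [h2]
    conv_lhs => rw [h1]
    have : 2 * V = ∑ v ∈ range V, 2 := by simp [mul_comm]
    rw [this, mul_sum, ← sum_add_distrib]
    refine sum_le_sum fun v _ => ?_
    rw [offDiag_card]
    generalize (S.filter (c · = v)).card = f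
    rcases f with _ | _ | f
    · simp
    · simp
    · have : (f + 1 + 1) * (f + 1 + 1) = f * f + 3 * f + 2 + (f + 1 + 1) := by ring
      rw [this, Nat.add_sub_cancel]
      nlinarith
  omega

lemma dlt_eq_card_filter (A B : Finset ℝ) (s : ℝ) :
    dlt A B s = (A.filter (fun a => a - s ∈ B)).card := by
  unfold dlt
  apply card_nbij' (fun p => p.1) (fun a => (a, a - s))
  · rintro ⟨a, b⟩ h
    simp only [coe_filter, mem_product, Set.mem_ofPred_eq] at h ⊢
    refine ⟨h.1.1, ?_⟩
    rw [← h.2]; simpa using h.1.2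
  · intro a h
    simp only [coe_filter, mem_product, Set.mem_ofPred_eq] at h ⊢
    exact ⟨h, by ring⟩
  · rintro ⟨a, b⟩ h
    simp only [coe_filter, mem_product, Set.mem_ofPred_eq] at h ⊢
    rw [← h.2]; simp
  · intro a _
    rfl

lemma dlt_le_left (A B : Finset ℝ) (s : ℝ) : dlt A B s ≤ A.card := by
  rw [dlt_eq_card_filter]; exact card_filter_le _ _

lemma dlt_le_right (A B : Finset ℝ) (s : ℝ) : dlt A B s ≤ B.card := by
  rw [dlt_eq_card_filter]
  apply card_le_card_of_injOn (fun a => a - s)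
  · intro a h
    exact (mem_filter.1 h).2
  · intro a _ b _ h
    simpa using h

lemma sum_dlt (A B : Finset ℝ) : ∑ s ∈ A - B, dlt A B s = A.card * B.card := by
  rw [← card_product]
  refine (card_eq_sum_card_fiberwise fun p hp => ?_).symm
  rw [mem_coe, mem_product] at hp
  exact sub_mem_sub hp.1 hp.2

lemma card_le_card_mul_self {A : Finset ℝ} (hA : ∀ a ∈ A, 0 < a) : A.card ≤ (A * A).card := by
  rcases A.eq_empty_or_nonempty with rfl | ⟨a, ha⟩
  · simp
  · refine card_le_card_of_injOn (fun x => a * x) (fun x hx => mul_mem_mul ha hx) ?_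
    intro x _ y _ h
    exact mul_left_cancel₀ (hA a ha).ne' h

/-- The differences having at least `t` representations. -/
noncomputable def richDiff (A B : Finset ℝ) (t : ℕ) : Finset ℝ :=
  (A - B).filter fun s => t ≤ dlt A B s

lemma card_mul_richDiff_mul_le_blockPairs {A : Finset ℝ} (hA : ∀ a ∈ A, 0 < a) (B : Finset ℝ)
    {t p q : ℕ} (hV : 2 * ((A * A).card / q + B.card / p + 1) ≤ t) :
    A.card * (richDiff A B t).card * t ≤
      (blockPairs (A * A) q).card * (blockPairs B p).card := by
  set c : ℝ → ℝ → ℝ → ℕ := fun b s a => rankIn (A * A) (a * b) / q + rankIn B (a - s) / p with hc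
  have c_inj : ∀ b ∈ A, ∀ s a a', c b s a = c b s a' →
      rankIn (A * A) (a * b) / q = rankIn (A * A) (a' * b) / q ∧
      rankIn B (a - s) / p = rankIn B (a' - s) / p := by
    intro b hb s
    have hm1 : Monotone fun a => rankIn (A * A) (a * b) / q := fun x y h =>
      Nat.div_le_div_right (rankIn_mono _ (mul_le_mul_of_nonneg_right h (hA b hb).le))
    have hm2 : Monotone fun a => rankIn B (a - s) / p := fun x y h =>
      Nat.div_le_div_right (rankIn_mono _ (sub_le_sub_right h s))
    intro a a' h
    simp only [hc] at h
    rcases le_total a a' with hl | hl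
    · have := hm1 hl
      have := hm2 hl
      simp only at *
      omega
    · have := hm1 hl
      have := hm2 hl
      simp only at *
      omega
  set Q : Finset ((ℝ × ℝ) × (ℝ × ℝ)) :=
    ((A ×ˢ richDiff A B t) ×ˢ (A ×ˢ A)).filter fun z =>
      (z.2.1 - z.1.2 ∈ B ∧ z.2.2 - z.1.2 ∈ B ∧ z.2.1 ≠ z.2.2) ∧
        c z.1.1 z.1.2 z.2.1 = c z.1.1 z.1.2 z.2.2 with hQ
  have lower : A.card * (richDiff A B t).card * t ≤ Q.card := by
    rw [← card_product, card_eq_sum_card_fiberwise (f := fun z => z.1) (s := Q)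
      (t := A ×ˢ richDiff A B t)]
    · rw [← smul_eq_mul]
      refine card_nsmul_le_sum _ _ _ ?_
      rintro ⟨b, s⟩ hbs
      have hs : t ≤ (A.filter (fun a => a - s ∈ B)).card := by
        rw [← dlt_eq_card_filter]
        exact (mem_filter.1 (mem_product.1 hbs).2).2
      refine (hs.trans (card_le_card_offDiag_filter _ (c b s) _ ?_ (hV.trans hs))).trans ?_
      · intro a _
        exact Nat.lt_succ_of_le (add_le_add (Nat.div_le_div_right (rankIn_le_card _ _))
          (Nat.div_le_div_right (rankIn_le_card _ _)))
      · apply card_le_card_of_injOn (fun u => ((b, s), u))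
        · rintro ⟨a, a'⟩ h
          simp only [coe_filter, mem_offDiag, mem_filter, Set.mem_ofPred_eq] at h
          simp only [hQ, coe_filter, mem_filter, Set.mem_ofPred_eq, mem_product]
          rw [mem_product] at hbs
          exact ⟨⟨⟨hbs, h.1.1.1, h.1.2.1.1⟩, ⟨h.1.1.2, h.1.2.1.2, h.1.2.2⟩, h.2⟩, trivial⟩
        · intro u _ v _ h
          exact (Prod.mk.inj h).2
    · intro z hz
      exact (mem_product.1 (mem_filter.1 hz).1).1
  refine lower.trans ?_
  rw [← card_product]
  apply card_le_card_of_injOn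
    (fun z => ((z.2.1 * z.1.1, z.2.2 * z.1.1), (z.2.1 - z.1.2, z.2.2 - z.1.2)))
  · rintro ⟨⟨b, s⟩, ⟨a, a'⟩⟩ hz
    simp only [hQ, coe_filter, Set.mem_ofPred_eq, mem_product] at hz
    obtain ⟨⟨⟨hb, _⟩, ha, ha'⟩, ⟨h1, h2, _⟩, h3⟩ := hz
    have := c_inj b hb s a a' h3
    simp only [mem_coe, mem_product, blockPairs, mem_filter]
    exact ⟨⟨⟨mul_mem_mul ha hb, mul_mem_mul ha' hb⟩, this.1⟩, ⟨h1, h2⟩, this.2⟩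
  · rintro ⟨⟨b, s⟩, ⟨a, a'⟩⟩ hz ⟨⟨b₂, s₂⟩, ⟨a₂, a₂'⟩⟩ _ h
    simp only [hQ, coe_filter, Set.mem_ofPred_eq, mem_product] at hz
    obtain ⟨⟨⟨hb, _⟩, _⟩, ⟨_, _, hne⟩, _⟩ := hz
    simp only [Prod.mk.injEq] at h ⊢
    obtain ⟨⟨e1, e2⟩, e3, e4⟩ := h
    have hd : a₂ - a₂' = a - a' := by linarith
    have hbb : b = b₂ := by
      apply mul_left_cancel₀ (sub_ne_zero.2 hne)
      calc (a - a') * b = (a₂ - a₂') * b₂ := by linarith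
        _ = (a - a') * b₂ := by rw [hd]
    subst hbb
    have ha := mul_right_cancel₀ (hA b hb).ne' e1
    have ha' := mul_right_cancel₀ (hA b hb).ne' e2
    subst ha ha'
    exact ⟨⟨rfl, by linarith⟩, rfl, rfl⟩

lemma card_mul_richDiff_le {A : Finset ℝ} (hA : ∀ a ∈ A, 0 < a) (B : Finset ℝ) (t : ℕ) :
    A.card * (richDiff A B t).card * t ^ 3 ≤ 81 * ((A * A).card ^ 2 * B.card ^ 2) := by
  have hM := card_le_card_mul_self hA
  rcases (richDiff A B t).eq_empty_or_nonempty with he | ⟨s, hs⟩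
  · simp [he]
  have ht := (mem_filter.1 hs).2
  have htA := ht.trans (dlt_le_left A B s)
  have htB := ht.trans (dlt_le_right A B s)
  rcases lt_or_ge t 4 with h4 | h4
  · have hN : (richDiff A B t).card ≤ A.card * B.card :=
      (card_filter_le _ _).trans (card_sub_le)
    have hB : B.card ≤ B.card ^ 2 := Nat.le_self_pow (by norm_num) _
    have ht3 : t ^ 3 ≤ 3 ^ 3 := Nat.pow_le_pow_left (by omega) 3
    calc A.card * (richDiff A B t).card * t ^ 3
        ≤ (A * A).card * ((A * A).card * B.card ^ 2) * 3 ^ 3 := by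
          gcongr
          exact hN.trans (by gcongr)
      _ ≤ 81 * ((A * A).card ^ 2 * B.card ^ 2) := by nlinarith [Nat.zero_le ((A * A).card ^ 2 * B.card ^ 2)]
  · have key : ∀ m : ℕ, t ≤ m → m / (8 * m / t + 1) ≤ t / 8 ∧ t * (8 * m / t + 1) ≤ 9 * m := by
      intro m hm
      have h1 : 8 * m < t * (8 * m / t + 1) := Nat.lt_mul_div_succ _ (by omega)
      have h2 : t * (8 * m / t) ≤ 8 * m := Nat.mul_div_le _ _
      refine ⟨?_, by rw [mul_add]; omega⟩
      rw [Nat.le_div_iff_mul_le (by norm_num)]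
      have h3 := Nat.div_mul_le_self m (8 * m / t + 1)
      generalize m / (8 * m / t + 1) = x at *
      generalize 8 * m / t + 1 = y at *
      by_contra! hx
      have hy : 0 < y := by
        rcases Nat.eq_zero_or_pos y with rfl | h
        · omega
        · exact h
      nlinarith
    obtain ⟨k1, k2⟩ := key _ (htA.trans hM)
    obtain ⟨k3, k4⟩ := key _ htB
    have hq : 0 < 8 * (A * A).card / t + 1 := Nat.succ_pos _
    have hp : 0 < 8 * B.card / t + 1 := Nat.succ_pos _
    generalize 8 * (A * A).card / t + 1 = q at *
    generalize 8 * B.card / t + 1 = p at *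
    have h := card_mul_richDiff_mul_le_blockPairs hA B (t := t) (p := p) (q := q) (by omega)
    have hbq := card_blockPairs_le (A * A) hq
    have hbp := card_blockPairs_le B hp
    calc A.card * (richDiff A B t).card * t ^ 3
        = A.card * (richDiff A B t).card * t * t ^ 2 := by ring
      _ ≤ ((A * A).card * q) * (B.card * p) * t ^ 2 := by
          exact Nat.mul_le_mul_right _ (h.trans (Nat.mul_le_mul hbq hbp))
      _ = (A * A).card * B.card * ((t * q) * (t * p)) := by ring
      _ ≤ (A * A).card * B.card * ((9 * (A * A).card) * (9 * B.card)) := by gcongr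
      _ = 81 * ((A * A).card ^ 2 * B.card ^ 2) := by ring

lemma sum_sum_range_dlt (A B : Finset ℝ) (h : ℕ → ℝ) :
    ∑ s ∈ A - B, ∑ j ∈ range (dlt A B s), h j =
      ∑ j ∈ range A.card, (richDiff A B (j + 1)).card * h j := by
  rw [sum_comm' (t' := range A.card) (s' := fun j => richDiff A B (j + 1))]
  · simp
  · intro s j
    have := dlt_le_left A B s
    simp only [mem_range, richDiff, mem_filter]
    constructor
    · rintro ⟨h1, h2⟩
      exact ⟨⟨h1, h2⟩, by omega⟩
    · rintro ⟨⟨h1, h2⟩, _⟩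
      exact ⟨h1, h2⟩

lemma card_mul_richDiff_mul_le {A : Finset ℝ} (hA : ∀ a ∈ A, 0 < a) (B : Finset ℝ) (j : ℕ) :
    (A.card : ℝ) * (richDiff A B (j + 1)).card ≤
      81 * ((A * A).card ^ 2 * B.card ^ 2) / ((j : ℝ) + 1) ^ 3 := by
  rw [le_div_iff₀ (by positivity)]
  exact_mod_cast card_mul_richDiff_le hA B (j + 1)

lemma sum_dlt_cube_le {A : Finset ℝ} (hA : ∀ a ∈ A, 0 < a) (hn : 0 < A.card) :
    ∑ s ∈ A - A, (dlt A A s : ℝ) ^ 3 ≤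
      243 * (A * A).card ^ 2 * A.card * (1 + Real.log A.card) := by
  have hcube : ∀ m : ℕ, (m : ℝ) ^ 3 ≤ ∑ j ∈ range m, 3 * ((j : ℝ) + 1) ^ 2 := by
    intro m
    induction m with
    | zero => simp
    | succ m ih =>
      rw [sum_range_succ]
      push_cast
      nlinarith [(Nat.cast_nonneg m : (0 : ℝ) ≤ m)]
  have hn' : (0 : ℝ) < A.card := by exact_mod_cast hn
  have hH : ∑ j ∈ range A.card, 1 / ((j : ℝ) + 1) ≤ 1 + Real.log A.card := by
    have := harmonic_le_one_add_log A.card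
    rw [harmonic] at this
    push_cast at this
    simpa using this
  refine (sum_le_sum fun s _ => hcube (dlt A A s)).trans ?_
  rw [sum_sum_range_dlt]
  refine le_of_mul_le_mul_left ?_ hn'
  rw [mul_sum]
  calc ∑ j ∈ range A.card, (A.card : ℝ) * ((richDiff A A (j + 1)).card * (3 * ((j : ℝ) + 1) ^ 2))
      ≤ ∑ j ∈ range A.card, 243 * (A * A).card ^ 2 * A.card ^ 2 * (1 / ((j : ℝ) + 1)) := by
        refine sum_le_sum fun j _ => ?_
        rw [← mul_assoc]
        refine (mul_le_mul_of_nonneg_right (card_mul_richDiff_mul_le hA A j)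
          (by positivity)).trans_eq ?_
        field_simp
        ring
    _ ≤ 243 * (A * A).card ^ 2 * A.card ^ 2 * (1 + Real.log A.card) := by
        rw [← mul_sum]
        gcongr
    _ = A.card * (243 * (A * A).card ^ 2 * A.card * (1 + Real.log A.card)) := by ring

lemma sum_inv_succ_sq_le {T : ℕ} (hT : 0 < T) (L : ℕ) :
    ∑ j ∈ range L, (if T ≤ j then 1 / ((j : ℝ) + 1) ^ 2 else (0 : ℝ)) ≤ 1 / (T : ℝ) := by
  have hT' : (0 : ℝ) < T := by exact_mod_cast hT
  have : ∑ j ∈ range L, (if T ≤ j then 1 / ((j : ℝ) + 1) ^ 2 else (0 : ℝ)) ≤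
      if T ≤ L then 1 / (T : ℝ) - 1 / L else (0 : ℝ) := by
    induction L with
    | zero => simp [hT.ne']
    | succ L ih =>
      rw [sum_range_succ]
      rcases lt_trichotomy (L + 1) T with h | h | h
      · rw [if_neg (by omega)] at ih
        rw [if_neg (by omega), if_neg (by omega)]
        linarith
      · rw [if_neg (by omega)] at ih
        rw [if_neg (by omega), if_pos (by omega), h]
        linarith
      · have hTL : T ≤ L := by omega
        rw [if_pos hTL] at ih
        rw [if_pos hTL, if_pos (by omega)]
        have hL : (0 : ℝ) < L := by
          exact_mod_cast hT.trans_le hTL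
        have : 1 / ((L : ℝ) + 1) ^ 2 ≤ 1 / L - 1 / (L + 1) := by
          rw [div_sub_div _ _ hL.ne' (by positivity), div_le_div_iff₀ (by positivity) (by positivity)]
          nlinarith
        push_cast
        linarith
  refine this.trans ?_
  split_ifs
  · have : (0 : ℝ) ≤ 1 / L := by positivity
    linarith
  · positivity

lemma sum_dlt_sq_le {A : Finset ℝ} (hA : ∀ a ∈ A, 0 < a) (hn : 0 < A.card) (B : Finset ℝ)
    {T : ℕ} (hT : 0 < T) :
    ∑ s ∈ A - B, (dlt A B s : ℝ) ^ 2 ≤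
      T * (A.card * B.card) + 162 * ((A * A).card ^ 2 * B.card ^ 2) / (A.card * T) := by
  have hsq : ∀ m : ℕ, (m : ℝ) ^ 2 ≤
      T * m + ∑ j ∈ range m, (if T ≤ j then 2 * ((j : ℝ) + 1) else 0) := by
    intro m
    induction m with
    | zero => simp
    | succ m ih =>
      rw [sum_range_succ]
      push_cast
      split_ifs with h
      · nlinarith [(Nat.cast_nonneg T : (0 : ℝ) ≤ T)]
      · have h0 : ∑ j ∈ range m, (if T ≤ j then 2 * ((j : ℝ) + 1) else 0) = 0 :=
          sum_eq_zero fun j hj => if_neg (by rw [mem_range] at hj; omega)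
        rw [h0]
        have : (m : ℝ) + 1 ≤ T := by exact_mod_cast Nat.lt_of_not_le h
        nlinarith [(Nat.cast_nonneg m : (0 : ℝ) ≤ m)]
  have hn' : (0 : ℝ) < A.card := by exact_mod_cast hn
  have hsum : ∑ s ∈ A - B, (dlt A B s : ℝ) = A.card * B.card := by
    exact_mod_cast sum_dlt A B
  refine (sum_le_sum fun s _ => hsq (dlt A B s)).trans ?_
  rw [sum_add_distrib, ← mul_sum, hsum, sum_sum_range_dlt]
  gcongr
  refine le_of_mul_le_mul_left ?_ hn'
  rw [mul_sum]
  calc ∑ j ∈ range A.card, (A.card : ℝ) * ((richDiff A B (j + 1)).card *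
        (if T ≤ j then 2 * ((j : ℝ) + 1) else 0))
      ≤ ∑ j ∈ range A.card, (162 * ((A * A).card ^ 2 * B.card ^ 2) : ℝ) *
          (if T ≤ j then 1 / ((j : ℝ) + 1) ^ 2 else (0 : ℝ)) := by
        refine sum_le_sum fun j _ => ?_
        rw [← mul_assoc]
        split_ifs
        · refine (mul_le_mul_of_nonneg_right (card_mul_richDiff_mul_le hA B j)
            (by positivity)).trans_eq ?_
          field_simp
          ring
        · simp
    _ ≤ 162 * ((A * A).card ^ 2 * B.card ^ 2) * (1 / (T : ℝ)) := by
        rw [← mul_sum]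
        gcongr
        exact sum_inv_succ_sq_le hT _
    _ = A.card * (162 * ((A * A).card ^ 2 * B.card ^ 2) / (A.card * T)) := by
        field_simp

lemma sum_dlt_sq_le_sqrt {A : Finset ℝ} (hA : ∀ a ∈ A, 0 < a) (hn : 0 < A.card) {B : Finset ℝ}
    (hB : 0 < B.card) :
    ∑ s ∈ A - B, (dlt A B s : ℝ) ^ 2 ≤ 164 * ((A * A).card * (B.card * √B.card)) := by
  have hn' : (0 : ℝ) < A.card := by exact_mod_cast hn
  have hB' : (1 : ℝ) ≤ B.card := by exact_mod_cast hB
  have hM : (A.card : ℝ) ≤ (A * A).card := by exact_mod_cast card_le_card_mul_self hA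
  have hr : 1 ≤ √(B.card : ℝ) := Real.one_le_sqrt.2 hB'
  have hrr : √(B.card : ℝ) * √(B.card : ℝ) = B.card := Real.mul_self_sqrt (by positivity)
  set r := √(B.card : ℝ)
  set x : ℝ := (A * A).card * r / A.card with hx
  have hx1 : 1 ≤ x := by
    rw [hx, le_div_iff₀ hn']
    nlinarith
  have hxn : x * A.card = (A * A).card * r := by
    rw [hx]; field_simp
  have hT1 : x ≤ ⌈x⌉₊ := Nat.le_ceil x
  have hT2 : (⌈x⌉₊ : ℝ) ≤ 2 * x := by
    have := Nat.ceil_lt_add_one (zero_le_one.trans hx1)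
    linarith
  have hT0 : 0 < ⌈x⌉₊ := Nat.ceil_pos.2 (by linarith)
  refine (sum_dlt_sq_le hA hn B hT0).trans ?_
  have h1 : (⌈x⌉₊ : ℝ) * (A.card * B.card) ≤ 2 * ((A * A).card * (B.card * r)) := by
    calc (⌈x⌉₊ : ℝ) * (A.card * B.card) ≤ 2 * x * (A.card * B.card) := by gcongr
      _ = 2 * (x * A.card) * B.card := by ring
      _ = 2 * ((A * A).card * (B.card * r)) := by rw [hxn]; ring
  have h2 : 162 * (((A * A).card : ℝ) ^ 2 * B.card ^ 2) / (A.card * ⌈x⌉₊) ≤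
      162 * ((A * A).card * (B.card * r)) := by
    rw [div_le_iff₀ (by positivity)]
    calc 162 * (((A * A).card : ℝ) ^ 2 * B.card ^ 2)
        = 162 * ((A * A).card * B.card) * ((A * A).card * (r * r)) := by rw [hrr]; ring
      _ = 162 * ((A * A).card * (B.card * r)) * (A.card * x) := by
          rw [mul_comm (A.card : ℝ) x, hxn]; ring
      _ ≤ _ := by gcongr
  linarith

lemma sum_card_fiber_mul_card_fiber {α β κ : Type*} [DecidableEq κ]
    (P : Finset α) (Q : Finset β) (K : Finset κ) (f : α → κ) (g : β → κ) (hf : ∀ p ∈ P, f p ∈ K) :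
    ∑ k ∈ K, (P.filter (f · = k)).card * (Q.filter (g · = k)).card =
      ((P ×ˢ Q).filter fun z => f z.1 = g z.2).card := by
  rw [card_eq_sum_card_fiberwise (f := fun z => f z.1) (t := K)]
  · refine sum_congr rfl fun k _ => ?_
    rw [← card_product]
    congr 1
    ext ⟨p, q⟩
    simp only [mem_product, mem_filter]
    grind
  · intro z hz
    exact hf _ (mem_product.1 (mem_filter.1 hz).1).1

lemma sum_dlt_mul_dlt_le (A F : Finset ℝ) :
    ∑ s ∈ A - A, dlt A A s * dlt F F s ≤ ∑ v ∈ A - F, dlt A F v ^ 2 := by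
  simp only [sq, dlt]
  rw [sum_card_fiber_mul_card_fiber _ _ _ (fun p : ℝ × ℝ => p.1 - p.2) (fun p : ℝ × ℝ => p.1 - p.2),
    sum_card_fiber_mul_card_fiber _ _ _ (fun p : ℝ × ℝ => p.1 - p.2) (fun p : ℝ × ℝ => p.1 - p.2)]
  · apply card_le_card_of_injOn (fun z => ((z.1.1, z.2.1), (z.1.2, z.2.2)))
    · rintro ⟨⟨a, a'⟩, ⟨f, f'⟩⟩ h
      simp only [coe_filter, mem_product, Set.mem_ofPred_eq] at h ⊢
      exact ⟨⟨⟨h.1.1.1, h.1.2.1⟩, h.1.1.2, h.1.2.2⟩, by linarith [h.2]⟩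
    · rintro ⟨⟨a, a'⟩, ⟨f, f'⟩⟩ _ ⟨⟨b, b'⟩, ⟨g, g'⟩⟩ _ h
      simp only [Prod.mk.injEq] at h ⊢
      tauto
  all_goals
    intro p hp
    rw [mem_product] at hp
    exact sub_mem_sub hp.1 hp.2

/-- The number of triples `((x, y), a)` in `A` with `x - y = s` and `x - a = t`. -/
noncomputable def tripleCount (A : Finset ℝ) (s t : ℝ) : ℕ :=
  (((A ×ˢ A) ×ˢ A).filter fun p => (p.1.1 - p.1.2, p.1.1 - p.2) = (s, t)).card

lemma sum_tripleCount_sq_le (A : Finset ℝ) :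
    ∑ s ∈ A - A, ∑ t ∈ A - A, tripleCount A s t ^ 2 ≤ ∑ u ∈ A - A, dlt A A u ^ 3 := by
  rw [← sum_product']
  simp only [sq, tripleCount]
  rw [sum_card_fiber_mul_card_fiber _ _ _ (fun p : (ℝ × ℝ) × ℝ => (p.1.1 - p.1.2, p.1.1 - p.2))
    (fun p : (ℝ × ℝ) × ℝ => (p.1.1 - p.1.2, p.1.1 - p.2)),
    card_eq_sum_card_fiberwise (f := fun z => z.1.1.1 - z.2.1.1) (t := A - A)]
  · refine sum_le_sum fun u _ => ?_
    rw [pow_succ, sq]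
    simp only [dlt]
    rw [← card_product, ← card_product]
    apply card_le_card_of_injOn
      (fun z => (((z.1.1.1, z.2.1.1), (z.1.1.2, z.2.1.2)), (z.1.2, z.2.2)))
    · rintro ⟨⟨⟨x, y⟩, a⟩, ⟨⟨x', y'⟩, a'⟩⟩ h
      simp only [coe_filter, mem_filter, mem_product, Set.mem_ofPred_eq, Prod.mk.injEq] at h
      simp only [mem_coe, mem_filter, mem_product]
      obtain ⟨⟨⟨⟨⟨hx, hy⟩, ha⟩, ⟨hx', hy'⟩, ha'⟩, e1, e2⟩, e3⟩ := h
      exact ⟨⟨⟨⟨hx, hx'⟩, e3⟩, ⟨hy, hy'⟩, by linarith⟩, ⟨ha, ha'⟩, by linarith⟩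
    · rintro ⟨⟨⟨x, y⟩, a⟩, ⟨⟨x', y'⟩, a'⟩⟩ _ ⟨⟨⟨z, w⟩, b⟩, ⟨⟨z', w'⟩, b'⟩⟩ _ h
      simp only [Prod.mk.injEq] at h ⊢
      tauto
  · rintro z hz
    simp only [coe_filter, mem_product, Set.mem_ofPred_eq] at hz
    exact sub_mem_sub hz.1.1.1.1 hz.1.2.1.1
  · intro p hp
    simp only [mem_product] at hp ⊢
    exact ⟨sub_mem_sub hp.1.1 hp.1.2, sub_mem_sub hp.1.1 hp.2⟩

lemma dlt_mul_card_sq_le (A : Finset ℝ) (s : ℝ) :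
    (dlt A A s * A.card) ^ 2 ≤
      dlt (A - A) (A - A) s * ∑ t ∈ A - A, tripleCount A s t ^ 2 := by
  have h : dlt A A s * A.card = ∑ t ∈ (A - A).filter (fun t => t - s ∈ A - A), tripleCount A s t := by
    rw [dlt, ← card_product, card_eq_sum_card_fiberwise (f := fun p => p.1.1 - p.2)
      (t := (A - A).filter (fun t => t - s ∈ A - A))]
    · refine sum_congr rfl fun t _ => ?_
      rw [tripleCount]
      congr 1
      ext ⟨⟨x, y⟩, a⟩
      simp only [mem_filter, mem_product, Prod.mk.injEq]
      tauto
    · rintro ⟨⟨x, y⟩, a⟩ h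
      simp only [coe_product, Set.mem_prod, mem_coe, mem_filter, mem_product] at h
      simp only [mem_coe, mem_filter]
      refine ⟨sub_mem_sub h.1.1.1 h.2, ?_⟩
      have : x - a - s = y - a := by linarith [h.1.2]
      rw [this]
      exact sub_mem_sub h.1.1.2 h.2
  rw [h, dlt_eq_card_filter]
  refine sq_sum_le_card_mul_sum_sq.trans (Nat.mul_le_mul_left _ ?_)
  exact sum_le_sum_of_subset (filter_subset _ _)

lemma sum_sq_cube_le {ι : Type*} (S : Finset ι) (w : ι → ℝ) (hw : ∀ i ∈ S, 0 ≤ w i) :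
    (∑ i ∈ S, w i ^ 2) ^ 3 ≤ S.card * (∑ i ∈ S, w i ^ 3) ^ 2 := by
  have h1 : (∑ i ∈ S, w i ^ 2) ^ 2 ≤ (∑ i ∈ S, w i ^ 3) * ∑ i ∈ S, w i :=
    sum_sq_le_sum_mul_sum_of_sq_le_mul S (fun i hi => pow_nonneg (hw i hi) 3) hw
      fun i _ => (by ring : (w i ^ 2) ^ 2 = w i ^ 3 * w i).le
  have h2 : (∑ i ∈ S, w i) ^ 2 ≤ S.card * ∑ i ∈ S, w i ^ 2 := sq_sum_le_card_mul_sum_sq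
  have h0 : 0 ≤ ∑ i ∈ S, w i ^ 2 := sum_nonneg fun i _ => sq_nonneg _
  rcases h0.eq_or_lt with h | h
  · rw [← h, zero_pow three_ne_zero]
    positivity
  · refine le_of_mul_le_mul_right ?_ h
    calc (∑ i ∈ S, w i ^ 2) ^ 3 * ∑ i ∈ S, w i ^ 2 = ((∑ i ∈ S, w i ^ 2) ^ 2) ^ 2 := by ring
      _ ≤ ((∑ i ∈ S, w i ^ 3) * ∑ i ∈ S, w i) ^ 2 := by gcongr
      _ = (∑ i ∈ S, w i ^ 3) ^ 2 * (∑ i ∈ S, w i) ^ 2 := by ring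
      _ ≤ (∑ i ∈ S, w i ^ 3) ^ 2 * (S.card * ∑ i ∈ S, w i ^ 2) := by gcongr
      _ = _ := by ring

lemma card_sq_mul_sum_sqrt_dlt_cube_sq_le (A : Finset ℝ) :
    (A.card : ℝ) ^ 2 * (∑ s ∈ A - A, √(dlt A A s : ℝ) ^ 3) ^ 2 ≤
      (∑ v ∈ A - (A - A), (dlt A (A - A) v : ℝ) ^ 2) * ∑ u ∈ A - A, (dlt A A u : ℝ) ^ 3 := by
  set e : ℝ → ℝ := fun s => ∑ t ∈ A - A, (tripleCount A s t : ℝ) ^ 2 with he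
  have he0 : ∀ s, 0 ≤ e s := fun s => sum_nonneg fun t _ => sq_nonneg _
  have h1 : ∑ s ∈ A - A, (dlt A A s : ℝ) * dlt (A - A) (A - A) s ≤
      ∑ v ∈ A - (A - A), (dlt A (A - A) v : ℝ) ^ 2 := by
    exact_mod_cast sum_dlt_mul_dlt_le A (A - A)
  have h2 : ∑ s ∈ A - A, e s ≤ ∑ u ∈ A - A, (dlt A A u : ℝ) ^ 3 := by
    simp only [he]
    exact_mod_cast sum_tripleCount_sq_le A
  have h3 : ∀ s, (dlt A A s : ℝ) * A.card ≤ √(dlt (A - A) (A - A) s : ℝ) * √(e s) := by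
    intro s
    rw [← Real.sqrt_mul (by positivity)]
    apply Real.le_sqrt_of_sq_le
    simp only [he]
    exact_mod_cast dlt_mul_card_sq_le A s
  have h4 : A.card * ∑ s ∈ A - A, √(dlt A A s : ℝ) ^ 3 ≤
      ∑ s ∈ A - A, √((dlt A A s : ℝ) * dlt (A - A) (A - A) s) * √(e s) := by
    rw [mul_sum]
    refine sum_le_sum fun s _ => ?_
    calc (A.card : ℝ) * √(dlt A A s : ℝ) ^ 3
        = √(dlt A A s : ℝ) * (√(dlt A A s : ℝ) ^ 2 * A.card) := by ring
      _ = √(dlt A A s : ℝ) * (dlt A A s * A.card) := by rw [Real.sq_sqrt (by positivity)]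
      _ ≤ √(dlt A A s : ℝ) * (√(dlt (A - A) (A - A) s : ℝ) * √(e s)) := by
          exact mul_le_mul_of_nonneg_left (h3 s) (Real.sqrt_nonneg _)
      _ = _ := by rw [Real.sqrt_mul (by positivity)]; ring
  have h5 : ∀ s, √((dlt A A s : ℝ) * dlt (A - A) (A - A) s) ^ 2 =
      (dlt A A s : ℝ) * dlt (A - A) (A - A) s := fun s => Real.sq_sqrt (by positivity)
  calc (A.card : ℝ) ^ 2 * (∑ s ∈ A - A, √(dlt A A s : ℝ) ^ 3) ^ 2
      = (A.card * ∑ s ∈ A - A, √(dlt A A s : ℝ) ^ 3) ^ 2 := by ring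
    _ ≤ (∑ s ∈ A - A, √((dlt A A s : ℝ) * dlt (A - A) (A - A) s) * √(e s)) ^ 2 := by
        gcongr
    _ ≤ (∑ s ∈ A - A, √((dlt A A s : ℝ) * dlt (A - A) (A - A) s) ^ 2) *
          ∑ s ∈ A - A, √(e s) ^ 2 := sum_mul_sq_le_sq_mul_sq _ _ _
    _ = (∑ s ∈ A - A, (dlt A A s : ℝ) * dlt (A - A) (A - A) s) * ∑ s ∈ A - A, e s := by
        simp only [h5, Real.sq_sqrt (he0 _)]
    _ ≤ _ := mul_le_mul h1 h2 (sum_nonneg fun s _ => he0 s) (sum_nonneg fun _ _ => sq_nonneg _)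

theorem stmt16 : ∃ K : ℝ, 0 < K ∧
    ∀ A : Finset ℝ, (∀ a ∈ A, 0 < a) → 2 ≤ A.card →
    ((A * A).card : ℝ) ^ 6 * ((A - A).card : ℝ) ^ 5 ≥
      K * (A.card : ℝ) ^ 14 / (Real.log A.card) ^ 2 := by
  refine ⟨1 / (164 * 243 * 3) ^ 2, by norm_num, fun A hA h2 => ?_⟩
  have hn : 0 < A.card := by omega
  have hn' : (0 : ℝ) < A.card := by exact_mod_cast hn
  have hne : (A - A).Nonempty := by
    have := card_pos.1 hn
    exact this.sub this
  have hE := sum_dlt_sq_le_sqrt hA hn (card_pos.2 hne)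
  have hE3 := sum_dlt_cube_le hA hn
  have hLi := card_sq_mul_sum_sqrt_dlt_cube_sq_le A
  have hHolder := sum_sq_cube_le (A - A) (fun s => √(dlt A A s : ℝ)) fun _ _ => Real.sqrt_nonneg _
  have hsum : ∑ s ∈ A - A, √(dlt A A s : ℝ) ^ 2 = (A.card : ℝ) ^ 2 := by
    simp only [Real.sq_sqrt (Nat.cast_nonneg _)]
    rw [sq]
    exact_mod_cast sum_dlt A A
  simp only [hsum] at hHolder
  have hlog : 1 + Real.log A.card ≤ 3 * Real.log A.card := by
    have h := Real.log_le_log (by norm_num) (show (2 : ℝ) ≤ A.card by exact_mod_cast h2)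
    linarith [Real.log_two_gt_d9]
  have hl0 : 0 < Real.log A.card := Real.log_pos (by exact_mod_cast h2)
  have hrr : √((A - A).card : ℝ) ^ 2 = (A - A).card := Real.sq_sqrt (by positivity)
  set n : ℝ := (A.card : ℝ)
  set M : ℝ := ((A * A).card : ℝ)
  set D : ℝ := ((A - A).card : ℝ)
  set r := √D
  have hr : 0 ≤ r := Real.sqrt_nonneg _
  have hD : 0 ≤ D := by positivity
  have hM : 0 ≤ M := by positivity
  have key : n ^ 7 ≤ 164 * 243 * 3 * (M ^ 3 * D ^ 2 * r * Real.log n) := by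
    refine le_of_mul_le_mul_left ?_ hn'
    calc n * n ^ 7 = n ^ 2 * (n ^ 2) ^ 3 := by ring
      _ ≤ n ^ 2 * (D * (∑ s ∈ A - A, √(dlt A A s : ℝ) ^ 3) ^ 2) := by gcongr
      _ = D * (n ^ 2 * (∑ s ∈ A - A, √(dlt A A s : ℝ) ^ 3) ^ 2) := by ring
      _ ≤ D * ((164 * (M * (D * r))) * (243 * M ^ 2 * n * (3 * Real.log n))) := by
          refine mul_le_mul_of_nonneg_left (hLi.trans ?_) hD
          refine mul_le_mul hE (hE3.trans (by gcongr)) (sum_nonneg fun _ _ => by positivity)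
            (by positivity)
      _ = _ := by ring
  rw [ge_iff_le, div_le_iff₀ (by positivity), one_div, inv_mul_le_iff₀ (by norm_num)]
  calc n ^ 14 = (n ^ 7) ^ 2 := by ring
    _ ≤ (164 * 243 * 3 * (M ^ 3 * D ^ 2 * r * Real.log n)) ^ 2 := by gcongr
    _ = (164 * 243 * 3) ^ 2 * (M ^ 6 * D ^ 4 * r ^ 2 * Real.log n ^ 2) := by ring
    _ = _ := by rw [hrr]; ring
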